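/- arXiv:1008.1652 — 4 statements merged into one kernel-verified Lean document; each statement's English description precedes it below -/
import Mathlib

section
/- For every regular language L over a finite alphabet Σ, the transition complexity of L equals the sum over all symbols b ∈ Σ of the b-transition complexity of L, i.e. tc(L) = Σ_{b ∈ Σ} tc_b(L). -/
/-- An incomplete DFA over alphabet `α` with state type `σ`:
the transition function is a partial function, modelled as `Option`-valued. -/
structure IDFA (α : Type) (σ : Type) where
  /-- The (partial) transition function. -/
  step : σ → α → Option σ
  /-- The start state. -/
  start : σ
  /-- The set of accepting states. -/
  accept : Set σ

namespace IDFA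

variable {α σ : Type}

/-- The extended (partial) transition function on words. -/
def evalFrom (A : IDFA α σ) (q : σ) (w : List α) : Option σ :=
  w.foldl (fun oq a => oq.bind fun p => A.step p a) (some q)

/-- Running the automaton from the start state. -/
def eval (A : IDFA α σ) (w : List α) : Option σ :=
  A.evalFrom A.start w

/-- The language recognized by an incomplete DFA: words on which the run is
defined and ends in an accepting state. -/
def accepts (A : IDFA α σ) : Set (List α) :=
  {w | ∃ q ∈ A.accept, A.eval w = some q}

/-- `#tr(A)`: the number of (defined) transitions of `A`. -/
noncomputable def trCount (A : IDFA α σ) : ℕ :=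
  {p : σ × α | (A.step p.1 p.2).isSome}.ncard

/-- `#tr(A, b)`: the number of `b`-transitions of `A`. -/
noncomputable def trCountOn (A : IDFA α σ) (b : α) : ℕ :=
  {q : σ | (A.step q b).isSome}.ncard

/-- An incomplete DFA is connected if every state is reachable from the start state. -/
def Connected (A : IDFA α σ) : Prop :=
  ∀ q : σ, ∃ w : List α, A.evalFrom A.start w = some q

end IDFA

/-- A language is regular iff it is recognized by some incomplete DFA with
finitely many states. -/
def IsRegularLang {α : Type} (L : Set (List α)) : Prop :=
  ∃ (σ : Type) (_ : Finite σ) (A : IDFA α σ), A.accepts = L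

/-- `tc(L)`: the transition complexity of `L`, i.e. the minimal number of
transitions of any incomplete DFA recognizing `L`. -/
noncomputable def tc {α : Type} (L : Set (List α)) : ℕ :=
  sInf {n | ∃ (σ : Type) (_ : Finite σ) (A : IDFA α σ), A.accepts = L ∧ A.trCount = n}

/-- `tc_b(L)`: the `b`-transition complexity of `L`, i.e. the minimal number of
`b`-transitions of any incomplete DFA recognizing `L`. -/
noncomputable def tcOn {α : Type} (L : Set (List α)) (b : α) : ℕ :=
  sInf {n | ∃ (σ : Type) (_ : Finite σ) (A : IDFA α σ), A.accepts = L ∧ A.trCountOn b = n}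

/-- `sc(L)`: the (incomplete-DFA) state complexity of `L`, i.e. the number of
states of a minimal incomplete DFA recognizing `L`. -/
noncomputable def sc {α : Type} (L : Set (List α)) : ℕ :=
  sInf {n | ∃ (σ : Type) (_ : Finite σ) (A : IDFA α σ), A.accepts = L ∧ Nat.card σ = n}

/-!
The automaton whose states are the left quotients of `L`, without the transitions into the empty
quotient, minimizes the number of `b`-transitions for all `b` simultaneously. Indeed, if `A`
recognizes `L` and the quotient `R = w⁻¹L` has an outgoing `b`-transition, then `A` reads `w` to a
state with residual language `R`, and this state has an outgoing `b`-transition as well; so the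
`b`-transitions of the quotient automaton inject into those of `A`. Since `#tr` is the sum over `b`
of the numbers of `b`-transitions, the same automaton also attains `tc L`.
-/

namespace IDFA

variable {α σ : Type}

/-- The completion of an incomplete DFA: `none` is added as a non-accepting sink state, so that
runs of `A` are, definitionally, runs of the completion. -/
def toDFA (A : IDFA α σ) : DFA α (Option σ) where
  step o a := o.bind fun q => A.step q a
  start := some A.start
  accept := some '' A.accept

theorem accepts_toDFA (A : IDFA α σ) : A.toDFA.accepts = A.accepts := by
  ext w
  exact exists_congr fun _ => and_congr_right fun _ => eq_comm

theorem acceptsFrom_toDFA_none (A : IDFA α σ) : A.toDFA.acceptsFrom none = 0 := by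
  have evalFrom_none (w : List α) : A.toDFA.evalFrom none w = none := by
    induction w with
    | nil => rfl
    | cons _ _ ih => exact ih
  ext w
  rw [DFA.mem_acceptsFrom, evalFrom_none]
  simp [toDFA]

theorem exists_step_isSome_of_cons_mem_acceptsFrom (A : IDFA α σ) {o : Option σ} {b : α}
    {v : List α} (h : b :: v ∈ A.toDFA.acceptsFrom o) :
    ∃ q, o = some q ∧ (A.step q b).isSome := by
  cases o with
  | none => simp [acceptsFrom_toDFA_none] at h
  | some q =>
    refine ⟨q, rfl, Option.isSome_iff_ne_none.mpr fun hstep => ?_⟩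
    have hv : v ∈ A.toDFA.acceptsFrom (A.step q b) := h
    simp [hstep, acceptsFrom_toDFA_none] at hv

theorem trCount_eq_sum_trCountOn [Fintype α] [Finite σ] (A : IDFA α σ) :
    A.trCount = ∑ b : α, A.trCountOn b := by
  classical
  have := Fintype.ofFinite σ
  simp only [trCount, trCountOn, Set.ncard_eq_toFinset_card', Set.toFinset_ofPred,
    Finset.card_filter]
  rw [Fintype.sum_prod_type, Finset.sum_comm]

open Classical in
/-- The incomplete DFA obtained from a complete one by deleting all transitions into dead states,
that is, states from which no word is accepted. The dead states themselves are kept. -/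
noncomputable def ofDFA (M : DFA α σ) : IDFA α σ where
  step q a := if ∃ w, w ∈ M.acceptsFrom (M.step q a) then some (M.step q a) else none
  start := M.start
  accept := M.accept

theorem step_ofDFA_isSome (M : DFA α σ) (q : σ) (a : α) :
    ((ofDFA M).step q a).isSome ↔ ∃ w, a :: w ∈ M.acceptsFrom q := by
  simp [ofDFA, DFA.mem_acceptsFrom]

theorem acceptsFrom_toDFA_ofDFA (M : DFA α σ) (q : σ) :
    (ofDFA M).toDFA.acceptsFrom (some q) = M.acceptsFrom q := by
  ext w
  induction w generalizing q with
  | nil => simp [DFA.mem_acceptsFrom, toDFA, ofDFA]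
  | cons a w ih =>
    change w ∈ (ofDFA M).toDFA.acceptsFrom ((ofDFA M).step q a) ↔ w ∈ M.acceptsFrom (M.step q a)
    by_cases hlive : ∃ v, v ∈ M.acceptsFrom (M.step q a)
    · rw [show (ofDFA M).step q a = some (M.step q a) from if_pos hlive, ih]
    · rw [show (ofDFA M).step q a = none from if_neg hlive, acceptsFrom_toDFA_none]
      exact iff_of_false (Language.notMem_zero w) (not_exists.mp hlive w)

theorem accepts_ofDFA (M : DFA α σ) : (ofDFA M).accepts = M.accepts := by
  rw [← accepts_toDFA]
  exact acceptsFrom_toDFA_ofDFA M M.start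

/-- The incomplete DFA of the left quotients of `L`, with transitions into the empty quotient left
undefined. It is minimal in transitions, but not always in states: the empty quotient may remain
as an isolated state. -/
noncomputable def ofLeftQuotients (L : Language α) : IDFA α (Set.range L.leftQuotient) :=
  ofDFA L.toDFA

theorem accepts_ofLeftQuotients (L : Language α) : (ofLeftQuotients L).accepts = L :=
  (accepts_ofDFA L.toDFA).trans L.accepts_toDFA

theorem acceptsFrom_languageToDFA {L : Language α} (R : Set.range L.leftQuotient) :
    L.toDFA.acceptsFrom R = R.val := by
  ext w
  induction w generalizing R with
  | nil => rfl
  | cons a _ ih => exact ih (L.toDFA.step R a)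

theorem step_ofLeftQuotients_isSome {L : Language α} (R : Set.range L.leftQuotient) (b : α) :
    ((ofLeftQuotients L).step R b).isSome ↔ ∃ v, b :: v ∈ R.val := by
  rw [ofLeftQuotients, step_ofDFA_isSome, acceptsFrom_languageToDFA]

theorem leftQuotient_accepts (A : IDFA α σ) (w : List α) :
    Language.leftQuotient A.accepts w = A.toDFA.acceptsFrom (A.eval w) := by
  rw [← accepts_toDFA]
  exact Language.leftQuotient_accepts_apply A.toDFA w

theorem trCountOn_ofLeftQuotients_le [Finite σ] (A : IDFA α σ) (b : α) :
    (ofLeftQuotients A.accepts).trCountOn b ≤ A.trCountOn b := by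
  have quotients_subset : Subtype.val '' {R | ((ofLeftQuotients A.accepts).step R b).isSome} ⊆
      (fun q => A.toDFA.acceptsFrom (some q)) '' {q | (A.step q b).isSome} := by
    rintro _ ⟨⟨_, w, hw⟩, hR, rfl⟩
    rw [leftQuotient_accepts] at hw
    subst hw
    obtain ⟨v, hv⟩ := (step_ofLeftQuotients_isSome _ b).mp hR
    obtain ⟨q, hq, hstep⟩ := A.exists_step_isSome_of_cons_mem_acceptsFrom hv
    exact ⟨q, hstep, congrArg A.toDFA.acceptsFrom hq.symm⟩
  calc (ofLeftQuotients A.accepts).trCountOn b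
    _ = (Subtype.val '' {R | ((ofLeftQuotients A.accepts).step R b).isSome}).ncard :=
      (Set.ncard_image_of_injective _ Subtype.val_injective).symm
    _ ≤ ((fun q => A.toDFA.acceptsFrom (some q)) '' {q | (A.step q b).isSome}).ncard :=
      Set.ncard_le_ncard quotients_subset (Set.toFinite _)
    _ ≤ A.trCountOn b := Set.ncard_image_le (Set.toFinite _)

end IDFA

namespace IsRegularLang

variable {α : Type} {L : Set (List α)}

theorem isRegular (hL : IsRegularLang L) : Language.IsRegular L := by
  obtain ⟨σ, _, A, rfl⟩ := hL
  exact Language.isRegular_iff.mpr ⟨Option σ, Fintype.ofFinite _, A.toDFA, A.accepts_toDFA⟩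

theorem finite_leftQuotients (hL : IsRegularLang L) :
    Finite (Set.range (Language.leftQuotient L)) :=
  hL.isRegular.finite_range_leftQuotient.to_subtype

theorem tcOn_eq_trCountOn_ofLeftQuotients (hL : IsRegularLang L) (b : α) :
    tcOn L b = (IDFA.ofLeftQuotients L).trCountOn b := by
  refine IsLeast.csInf_eq ⟨⟨_, hL.finite_leftQuotients, _, IDFA.accepts_ofLeftQuotients L, rfl⟩, ?_⟩
  rintro _ ⟨σ, _, A, rfl, rfl⟩
  exact A.trCountOn_ofLeftQuotients_le b

theorem tc_eq_trCount_ofLeftQuotients [Finite α] (hL : IsRegularLang L) :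
    tc L = (IDFA.ofLeftQuotients L).trCount := by
  have := Fintype.ofFinite α
  have := hL.finite_leftQuotients
  refine IsLeast.csInf_eq ⟨⟨_, this, _, IDFA.accepts_ofLeftQuotients L, rfl⟩, ?_⟩
  rintro _ ⟨σ, _, A, rfl, rfl⟩
  rw [IDFA.trCount_eq_sum_trCountOn, IDFA.trCount_eq_sum_trCountOn]
  exact Finset.sum_le_sum fun b _ => A.trCountOn_ofLeftQuotients_le b

end IsRegularLang

/-- for every regular language `L` over a finite alphabet,
`tc(L) = ∑_{b ∈ Σ} tc_b(L)`. -/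
theorem tc_eq_sum_tcOn {α : Type} [Fintype α]
    (L : Set (List α)) (hL : IsRegularLang L) :
    tc L = ∑ b : α, tcOn L b := by
  have := hL.finite_leftQuotients
  calc tc L
    _ = (IDFA.ofLeftQuotients L).trCount := hL.tc_eq_trCount_ofLeftQuotients
    _ = ∑ b : α, (IDFA.ofLeftQuotients L).trCountOn b := IDFA.trCount_eq_sum_trCountOn _
    _ = ∑ b : α, tcOn L b :=
      Finset.sum_congr rfl fun b _ => (hL.tcOn_eq_trCountOn_ofLeftQuotients b).symm
end

section
/- Let Σ be an alphabet with at least two symbols and let L₁, L₂ be regular languages over Σ. Then for every b ∈ Σ, tc_b(L₁ ∪ L₂) ≤ tc_b(L₁)·tc_b(L₂) + tc_b(L₁)·(1 + sc(L₂) − tc_b(L₂)) + tc_b(L₂)·(1 + sc(L₁) − tc_b(L₁)). -/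
/-!
Work with complete DFAs and delete the transitions that lead to a dead state. If `Mᵢ` is the DFA
whose states are the left quotients of `Lᵢ`, then pruning it leaves exactly `tc_b(Lᵢ)`
`b`-transitions, and it has at most `1 + sc(Lᵢ)` states, the extra one being the empty quotient.
In the product of `M₁` and `M₂` for the union, a state keeps its `b`-transition after pruning iff
one of its components does; splitting these states according to whether both components do, or only
the first, or only the second, gives the three summands of the bound.
-/

theorem ncard_setOf_fst_mem_or_snd_mem {β γ : Type*} [Finite β] [Finite γ]
    (s : Set β) (t : Set γ) :
    {p : β × γ | p.1 ∈ s ∨ p.2 ∈ t}.ncard =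
      s.ncard * t.ncard + s.ncard * (Nat.card γ - t.ncard)
        + t.ncard * (Nat.card β - s.ncard) := by
  have split_eq : {p : β × γ | p.1 ∈ s ∨ p.2 ∈ t} = s ×ˢ t ∪ s ×ˢ tᶜ ∪ sᶜ ×ˢ t := by
    ext p
    simp only [Set.mem_ofPred_eq, Set.mem_union, Set.mem_prod, Set.mem_compl_iff]
    tauto
  have disjoint_snd : Disjoint (s ×ˢ t) (s ×ˢ tᶜ) :=
    Set.disjoint_prod.2 (Or.inr disjoint_compl_right)
  have disjoint_fst : Disjoint (s ×ˢ t ∪ s ×ˢ tᶜ) (sᶜ ×ˢ t) :=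
    Set.disjoint_union_left.2 ⟨Set.disjoint_prod.2 (Or.inl disjoint_compl_right),
      Set.disjoint_prod.2 (Or.inl disjoint_compl_right)⟩
  rw [split_eq, Set.ncard_union_eq disjoint_fst, Set.ncard_union_eq disjoint_snd, Set.ncard_prod,
    Set.ncard_prod, Set.ncard_prod, Set.ncard_compl, Set.ncard_compl, mul_comm t.ncard]

theorem acceptsFrom_toDFA {α : Type*} {L : Language α} (K : Set.range L.leftQuotient) :
    L.toDFA.acceptsFrom K = K.val := by
  ext w
  induction w generalizing K with
  | nil => exact Iff.rfl
  | cons a _ ih => exact ih (L.toDFA.step K a)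

theorem card_range_leftQuotient_accepts_le {α σ : Type*} [Finite σ] (M : DFA α σ) :
    Nat.card (Set.range M.accepts.leftQuotient) ≤ Nat.card σ :=
  calc Nat.card (Set.range M.accepts.leftQuotient)
      ≤ Nat.card (Set.range M.acceptsFrom) := by
        rw [Language.leftQuotient_accepts]
        exact Nat.card_mono (Set.finite_range _) (Set.range_comp_subset_range _ _)
    _ ≤ Nat.card σ := Finite.card_range_le _

namespace IDFA

variable {α σ τ : Type}

/-- The completion of an incomplete DFA: the DFA on `Option σ` in which `none` is a rejecting sink
that receives all undefined transitions. It reduces statements about left quotients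
of the recognized language to those for DFAs. -/
def completion (A : IDFA α σ) : DFA α (Option σ) where
  step o a := o.bind fun q => A.step q a
  start := some A.start
  accept := some '' A.accept

theorem accepts_completion (A : IDFA α σ) : A.completion.accepts = A.accepts := by
  ext w
  exact exists_congr fun q => and_congr_right fun _ => eq_comm

theorem notMem_acceptsFrom_completion_none (A : IDFA α σ) (w : List α) :
    w ∉ A.completion.acceptsFrom none := by
  induction w with
  | nil => rintro ⟨q, -, hq⟩; cases hq
  | cons _ _ ih => exact ih

theorem isSome_step_of_cons_mem_acceptsFrom_completion {A : IDFA α σ} {q : σ} {a : α} {w : List α}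
    (h : a :: w ∈ A.completion.acceptsFrom (some q)) : (A.step q a).isSome := by
  change w ∈ A.completion.acceptsFrom (A.step q a) at h
  cases hstep : A.step q a with
  | none => exact (A.notMem_acceptsFrom_completion_none w (hstep ▸ h)).elim
  | some _ => rfl

open Classical in
/-- The incomplete DFA obtained from a DFA by deleting all transitions into dead states, that is,
states from which no word is accepted. The dead states themselves are kept, so pruning
lowers the number of transitions but not the number of states. -/
noncomputable def prune (M : DFA α σ) : IDFA α σ where
  step s a := if ∃ w, w ∈ M.acceptsFrom (M.step s a) then some (M.step s a) else none
  start := M.start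
  accept := M.accept

theorem acceptsFrom_completion_prune (M : DFA α σ) (s : σ) :
    (prune M).completion.acceptsFrom (some s) = M.acceptsFrom s := by
  ext w
  induction w generalizing s with
  | nil => exact (Option.some_injective σ).mem_set_image
  | cons a w ih =>
    change w ∈ (prune M).completion.acceptsFrom ((prune M).step s a) ↔
      w ∈ M.acceptsFrom (M.step s a)
    by_cases live : ∃ v, v ∈ M.acceptsFrom (M.step s a)
    · rw [show (prune M).step s a = some (M.step s a) from if_pos live, ih]
    · rw [show (prune M).step s a = none from if_neg live]
      exact iff_of_false (notMem_acceptsFrom_completion_none _ w) fun hw => live ⟨w, hw⟩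

theorem accepts_prune (M : DFA α σ) : (prune M).accepts = M.accepts :=
  (accepts_completion _).symm.trans (acceptsFrom_completion_prune M M.start)

theorem isSome_step_prune {M : DFA α σ} {s : σ} {a : α} :
    ((prune M).step s a).isSome ↔ ∃ w, w ∈ M.acceptsFrom (M.step s a) := by
  simp [prune]

theorem isSome_step_prune_union {M : DFA α σ} {N : DFA α τ} {p : σ × τ} {a : α} :
    ((prune (M.union N)).step p a).isSome ↔
      ((prune M).step p.1 a).isSome ∨ ((prune N).step p.2 a).isSome := by
  simp only [isSome_step_prune, DFA.union_step, DFA.acceptsFrom_union, Language.mem_add, exists_or]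

theorem trCountOn_prune_union [Finite σ] [Finite τ] (M : DFA α σ) (N : DFA α τ) (b : α) :
    (prune (M.union N)).trCountOn b =
      (prune M).trCountOn b * (prune N).trCountOn b
        + (prune M).trCountOn b * (Nat.card τ - (prune N).trCountOn b)
        + (prune N).trCountOn b * (Nat.card σ - (prune M).trCountOn b) := by
  simp only [trCountOn, isSome_step_prune_union]
  exact ncard_setOf_fst_mem_or_snd_mem {s | ((prune M).step s b).isSome}
    {t | ((prune N).step t b).isSome}

theorem trCountOn_prune_toDFA_le [Finite σ] (A : IDFA α σ) (b : α) :
    (prune A.completion.accepts.toDFA).trCountOn b ≤ A.trCountOn b := by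
  set live := {K | ((prune A.completion.accepts.toDFA).step K b).isSome}
  have live_subset : Subtype.val '' live ⊆
      (fun q => A.completion.acceptsFrom (some q)) '' {q | (A.step q b).isSome} := by
    rintro _ ⟨⟨_, u, rfl⟩, live_u, rfl⟩
    obtain ⟨w, hw⟩ := isSome_step_prune.1 live_u
    rw [acceptsFrom_toDFA] at hw
    change b :: w ∈ A.completion.accepts.leftQuotient u at hw
    change A.completion.accepts.leftQuotient u ∈ _
    rw [Language.leftQuotient_accepts_apply] at hw ⊢
    cases heval : A.completion.eval u with
    | none => exact (A.notMem_acceptsFrom_completion_none _ (heval ▸ hw)).elim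
    | some q => exact ⟨q, isSome_step_of_cons_mem_acceptsFrom_completion (heval ▸ hw), rfl⟩
  calc live.ncard
      = (Subtype.val '' live).ncard := (Set.ncard_image_of_injective _ Subtype.val_injective).symm
    _ ≤ _ := Set.ncard_le_ncard live_subset
    _ ≤ A.trCountOn b := Set.ncard_image_le

theorem tcOn_le_trCountOn [Finite σ] {A : IDFA α σ} {L : Set (List α)} (h : A.accepts = L) (b : α) :
    tcOn L b ≤ A.trCountOn b :=
  Nat.sInf_le ⟨σ, inferInstance, A, h, rfl⟩

end IDFA

namespace IsRegularLang

variable {α : Type} {L : Language α}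

theorem finite_range_leftQuotient (h : IsRegularLang L) : (Set.range L.leftQuotient).Finite := by
  obtain ⟨σ, _, A, accepts_eq⟩ := h
  have := Fintype.ofFinite σ
  have isRegular : L.IsRegular := ⟨_, inferInstance, _, A.accepts_completion.trans accepts_eq⟩
  exact isRegular.finite_range_leftQuotient

theorem card_range_leftQuotient_le (h : IsRegularLang L) :
    Nat.card (Set.range L.leftQuotient) ≤ 1 + sc L := by
  obtain ⟨σ, hσ, A, hA⟩ := h
  refine tsub_le_iff_left.1 (le_csInf ⟨_, σ, hσ, A, hA, rfl⟩ ?_)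
  rintro _ ⟨τ, _, B, hB, rfl⟩
  obtain rfl : B.completion.accepts = L := B.accepts_completion.trans hB
  rw [tsub_le_iff_right, ← Finite.card_option]
  exact card_range_leftQuotient_accepts_le B.completion

theorem trCountOn_prune_toDFA (h : IsRegularLang L) (b : α) :
    (IDFA.prune L.toDFA).trCountOn b = tcOn L b := by
  have := h.finite_range_leftQuotient.to_subtype
  have accepts_eq : (IDFA.prune L.toDFA).accepts = L :=
    (IDFA.accepts_prune _).trans L.accepts_toDFA
  apply le_antisymm
  · refine le_csInf ⟨_, _, this, _, accepts_eq, rfl⟩ ?_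
    rintro _ ⟨σ, _, A, hA, rfl⟩
    obtain rfl : A.completion.accepts = L := A.accepts_completion.trans hA
    exact A.trCountOn_prune_toDFA_le b
  · exact IDFA.tcOn_le_trCountOn accepts_eq b

end IsRegularLang

theorem tcOn_union_le_general {α : Type} {L₁ L₂ : Set (List α)}
    (h₁ : IsRegularLang L₁) (h₂ : IsRegularLang L₂) (b : α) :
    tcOn (L₁ ∪ L₂) b ≤
      tcOn L₁ b * tcOn L₂ b
        + tcOn L₁ b * (1 + sc L₂ - tcOn L₂ b)
        + tcOn L₂ b * (1 + sc L₁ - tcOn L₁ b) := by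
  have := h₁.finite_range_leftQuotient.to_subtype
  have := h₂.finite_range_leftQuotient.to_subtype
  let M₁ := Language.toDFA L₁
  let M₂ := Language.toDFA L₂
  have accepts_eq : (IDFA.prune (M₁.union M₂)).accepts = L₁ ∪ L₂ :=
    (IDFA.accepts_prune _).trans <| (DFA.accepts_union M₁ M₂).trans <|
      congrArg₂ (· + ·) (Language.accepts_toDFA L₁) (Language.accepts_toDFA L₂)
  calc tcOn (L₁ ∪ L₂) b
      ≤ (IDFA.prune (M₁.union M₂)).trCountOn b := IDFA.tcOn_le_trCountOn accepts_eq b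
    _ = _ := IDFA.trCountOn_prune_union _ _ b
    _ ≤ _ := by
      rw [h₁.trCountOn_prune_toDFA, h₂.trCountOn_prune_toDFA]
      gcongr
      · exact h₂.card_range_leftQuotient_le
      · exact h₁.card_range_leftQuotient_le

/-- upper bound for the `b`-transition complexity of union. -/
theorem tcOn_union_le {α : Type} [Finite α] (hcard : 2 ≤ Nat.card α)
    (L₁ L₂ : Set (List α)) (h₁ : IsRegularLang L₁) (h₂ : IsRegularLang L₂) :
    ∀ b : α,
      tcOn (L₁ ∪ L₂) b ≤
        tcOn L₁ b * tcOn L₂ b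
          + tcOn L₁ b * (1 + sc L₂ - tcOn L₂ b)
          + tcOn L₂ b * (1 + sc L₁ - tcOn L₁ b) :=
  tcOn_union_le_general h₁ h₂
end

section
/- Let Σ be an alphabet with at least two symbols and fix b ∈ Σ. For all relatively prime integers n₁, n₂ ≥ 2 and all integers k₁, k₂ with 1 ≤ kᵢ < nᵢ (i = 1, 2), there exist regular languages L₁, L₂ over Σ with sc(Lᵢ) = nᵢ and tc_b(Lᵢ) = kᵢ (i = 1, 2) such that tc_b(L₁ ∪ L₂) = k₁·k₂ + k₁·(1 + n₂ − k₂) + k₂·(1 + n₁ − k₁), i.e. tc_b(L₁ ∪ L₂) = k₁n₂ + k₂n₁ − k₁k₂ + k₁ + k₂. -/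
/-!
The witnesses are the incomplete DFAs on `ZMod n` in which one symbol `a ≠ b` rotates the cycle,
`b` loops on the `k` states `0, …, k - 1`, and `0` is both initial and accepting. In the product
automaton for the union, where a component whose run has died is recorded as `none`, the `b`-domain
has `k₁ (n₂ + 1) + k₂ (n₁ + 1) - k₁ k₂` states by inclusion–exclusion. No DFA has fewer, because
the Chinese remainder theorem lets `a`-powers move the two coordinates independently: this makes all
states of the `b`-domain reachable and all states of the product inequivalent.
-/

namespace IDFA

variable {α σ τ : Type}

theorem evalFrom_concat (A : IDFA α σ) (q : σ) (w : List α) (c : α) :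
    A.evalFrom q (w ++ [c]) = (A.evalFrom q w).bind (A.step · c) :=
  List.foldl_concat ..

theorem evalFrom_append (A : IDFA α σ) (q : σ) (u v : List α) :
    A.evalFrom q (u ++ v) = (A.evalFrom q u).bind (A.evalFrom · v) := by
  induction v using List.reverseRecOn with
  | nil => simp [evalFrom]
  | append_singleton v c ih =>
    simp only [← List.append_assoc, evalFrom_concat, ih, Option.bind_assoc]

/-- The right language of the state `q`: the words leading from `q` to an accepting state.
Two states are equivalent when their right languages agree. -/
def acceptsFrom (A : IDFA α σ) (q : σ) : Set (List α) :=
  {w | ∃ p ∈ A.accept, A.evalFrom q w = some p}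

theorem nil_mem_acceptsFrom (A : IDFA α σ) (q : σ) : [] ∈ A.acceptsFrom q ↔ q ∈ A.accept := by
  simp [acceptsFrom, evalFrom]

theorem append_mem_acceptsFrom (A : IDFA α σ) (q : σ) (u v : List α) :
    u ++ v ∈ A.acceptsFrom q ↔ ∃ p ∈ A.evalFrom q u, v ∈ A.acceptsFrom p := by
  simp only [acceptsFrom, Set.mem_ofPred_eq, evalFrom_append, Option.bind_eq_some_iff,
    Option.mem_def]
  tauto

theorem cons_mem_acceptsFrom (A : IDFA α σ) (q : σ) (c : α) (w : List α) :
    c :: w ∈ A.acceptsFrom q ↔ ∃ p ∈ A.step q c, w ∈ A.acceptsFrom p :=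
  A.append_mem_acceptsFrom q [c] w

theorem acceptsFrom_eq_of_eval_eq_some {A : IDFA α σ} {B : IDFA α τ} (h : A.accepts = B.accepts)
    {w : List α} {q : σ} {p : τ} (hq : A.eval w = some q) (hp : B.eval w = some p) :
    A.acceptsFrom q = B.acceptsFrom p := by
  ext z
  have hA := A.append_mem_acceptsFrom A.start w z
  have hB := B.append_mem_acceptsFrom B.start w z
  rw [← eval, hq] at hA
  rw [← eval, hp] at hB
  simp only [Option.mem_some_iff, exists_eq_left'] at hA hB
  rw [← hA, ← hB]
  exact Set.ext_iff.1 h (w ++ z)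

theorem exists_acceptsFrom_eq {A : IDFA α σ} {B : IDFA α τ} (h : A.accepts = B.accepts) {q : σ}
    (reachable : ∃ w, A.eval w = some q) (useful : (A.acceptsFrom q).Nonempty) :
    ∃ p, B.acceptsFrom p = A.acceptsFrom q := by
  obtain ⟨w, hw⟩ := reachable
  obtain ⟨z, hz⟩ := useful
  have hwz : w ++ z ∈ B.accepts := h ▸ (A.append_mem_acceptsFrom A.start w z).2 ⟨q, hw, hz⟩
  obtain ⟨p, hp, -⟩ := (B.append_mem_acceptsFrom B.start w z).1 hwz
  exact ⟨p, (acceptsFrom_eq_of_eval_eq_some h hw hp).symm⟩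

theorem card_le_card_of_accepts_eq [Finite τ] {A : IDFA α σ} {B : IDFA α τ}
    (h : A.accepts = B.accepts) (connected : A.Connected)
    (useful : ∀ q, (A.acceptsFrom q).Nonempty) (reduced : Function.Injective A.acceptsFrom) :
    Nat.card σ ≤ Nat.card τ := by
  choose f hf using fun q => exists_acceptsFrom_eq h (connected q) (useful q)
  refine Nat.card_le_card_of_injective f fun q q' hqq' => reduced ?_
  rw [← hf q, ← hf q', hqq']

theorem trCountOn_le_trCountOn_of_accepts_eq [Finite τ] {A : IDFA α σ} {B : IDFA α τ}
    (h : A.accepts = B.accepts) {b : α}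
    (reachable : ∀ q, (A.step q b).isSome → ∃ w, A.eval w = some q)
    (useful : ∀ q, ∀ p ∈ A.step q b, (A.acceptsFrom p).Nonempty)
    (reduced : Set.InjOn A.acceptsFrom {q | (A.step q b).isSome}) :
    A.trCountOn b ≤ B.trCountOn b := by
  have exists_cons_mem (q : σ) (hq : (A.step q b).isSome) : ∃ z, b :: z ∈ A.acceptsFrom q := by
    obtain ⟨p, hp⟩ := Option.isSome_iff_exists.1 hq
    obtain ⟨z, hz⟩ := useful q p hp
    exact ⟨z, (A.cons_mem_acceptsFrom q b z).2 ⟨p, hp, hz⟩⟩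
  have : Nonempty τ := ⟨B.start⟩
  choose! f hf using fun q hq =>
    exists_acceptsFrom_eq h (reachable q hq) ((exists_cons_mem q hq).elim fun _ hz => ⟨_, hz⟩)
  refine Set.ncard_le_ncard_of_injOn f (fun q hq => ?_) (fun q hq q' hq' hqq' => ?_)
  · obtain ⟨z, hz⟩ := exists_cons_mem q hq
    rw [← hf q hq, cons_mem_acceptsFrom] at hz
    obtain ⟨p, hp, -⟩ := hz
    exact Option.isSome_of_mem hp
  · exact reduced hq hq' (by rw [← hf q hq, ← hf q' hq', hqq'])

theorem sc_accepts [Finite σ] {A : IDFA α σ} (connected : A.Connected)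
    (useful : ∀ q, (A.acceptsFrom q).Nonempty) (reduced : Function.Injective A.acceptsFrom) :
    sc A.accepts = Nat.card σ :=
  IsLeast.csInf_eq ⟨⟨σ, inferInstance, A, rfl, rfl⟩, by
    rintro _ ⟨τ, _, B, hB, rfl⟩
    exact card_le_card_of_accepts_eq hB.symm connected useful reduced⟩

theorem tcOn_accepts [Finite σ] {A : IDFA α σ} {b : α}
    (reachable : ∀ q, (A.step q b).isSome → ∃ w, A.eval w = some q)
    (useful : ∀ q, ∀ p ∈ A.step q b, (A.acceptsFrom p).Nonempty)
    (reduced : Set.InjOn A.acceptsFrom {q | (A.step q b).isSome}) :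
    tcOn A.accepts b = A.trCountOn b :=
  IsLeast.csInf_eq ⟨⟨σ, inferInstance, A, rfl, rfl⟩, by
    rintro _ ⟨τ, _, B, hB, rfl⟩
    exact trCountOn_le_trCountOn_of_accepts_eq hB.symm reachable useful reduced⟩

section Union

/-- The product automaton for the union. A component is `none` once the run of the corresponding
automaton has died; a transition that would kill both components is undefined, so that
`(none, none)` is an isolated junk state. -/
def union (A : IDFA α σ) (B : IDFA α τ) : IDFA α (Option σ × Option τ) where
  step s c := Option.guard (fun t => t.1.isSome || t.2.isSome)
    (s.1.bind (A.step · c), s.2.bind (B.step · c))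
  start := (some A.start, some B.start)
  accept := {s | (∃ p ∈ s.1, p ∈ A.accept) ∨ ∃ q ∈ s.2, q ∈ B.accept}

variable (A : IDFA α σ) (B : IDFA α τ)

theorem mem_step_union (s t : Option σ × Option τ) (c : α) :
    t ∈ (A.union B).step s c ↔
      t = (s.1.bind (A.step · c), s.2.bind (B.step · c)) ∧ (t.1.isSome ∨ t.2.isSome) := by
  simp only [union, Option.mem_def, Option.guard_eq_some_iff, Bool.or_eq_true]
  grind

theorem isSome_step_union (s : Option σ × Option τ) (c : α) :
    ((A.union B).step s c).isSome ↔
      (∃ p ∈ s.1, (A.step p c).isSome) ∨ ∃ q ∈ s.2, (B.step q c).isSome := by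
  obtain ⟨_ | p, _ | q⟩ := s <;> simp [union]

theorem eval_union (w : List α) :
    (A.union B).eval w =
      Option.guard (fun t => t.1.isSome || t.2.isSome) (A.eval w, B.eval w) := by
  induction w using List.reverseRecOn with
  | nil => rfl
  | append_singleton w c ih =>
    simp only [eval] at ih ⊢
    rw [evalFrom_concat, ih, evalFrom_concat, evalFrom_concat]
    cases A.evalFrom A.start w <;> cases B.evalFrom B.start w <;> rfl

theorem mem_acceptsFrom_union (s : Option σ × Option τ) (w : List α) :
    w ∈ (A.union B).acceptsFrom s ↔
      (∃ p ∈ s.1, w ∈ A.acceptsFrom p) ∨ ∃ q ∈ s.2, w ∈ B.acceptsFrom q := by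
  induction w generalizing s with
  | nil => simp only [nil_mem_acceptsFrom]; rfl
  | cons c w ih =>
    simp only [cons_mem_acceptsFrom, mem_step_union, ih, and_assoc, exists_eq_left,
      Option.isSome_iff_exists, ← Option.mem_def, Option.mem_bind_iff]
    grind

theorem accepts_union : (A.union B).accepts = A.accepts ∪ B.accepts := by
  ext w
  refine (mem_acceptsFrom_union A B (A.union B).start w).trans ?_
  simp [union, accepts, acceptsFrom, eval]

theorem acceptsFrom_union_nonempty (hA : ∀ p, (A.acceptsFrom p).Nonempty)
    (hB : ∀ q, (B.acceptsFrom q).Nonempty) {s : Option σ × Option τ}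
    (hs : s.1.isSome ∨ s.2.isSome) : ((A.union B).acceptsFrom s).Nonempty := by
  simp only [Option.isSome_iff_exists] at hs
  obtain ⟨p, hp⟩ | ⟨q, hq⟩ := hs
  · exact (hA p).mono fun w hw => (mem_acceptsFrom_union A B s w).2 (.inl ⟨p, hp, hw⟩)
  · exact (hB q).mono fun w hw => (mem_acceptsFrom_union A B s w).2 (.inr ⟨q, hq, hw⟩)

theorem trCountOn_union [Finite σ] [Finite τ] (b : α) :
    (A.union B).trCountOn b + A.trCountOn b * B.trCountOn b =
      A.trCountOn b * (Nat.card τ + 1) + B.trCountOn b * (Nat.card σ + 1) := by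
  set S : Set (Option σ) := some '' {p | (A.step p b).isSome} with hS
  set T : Set (Option τ) := some '' {q | (B.step q b).isSome} with hT
  have card_S : S.ncard = A.trCountOn b := Set.ncard_image_of_injective _ (Option.some_injective σ)
  have card_T : T.ncard = B.trCountOn b := Set.ncard_image_of_injective _ (Option.some_injective τ)
  have domain_eq : {s | ((A.union B).step s b).isSome} = S ×ˢ Set.univ ∪ Set.univ ×ˢ T := by
    ext ⟨x, y⟩
    simp [isSome_step_union, hS, hT, and_comm, @eq_comm _ (some _)]
  have inclusion_exclusion := Set.ncard_union_add_ncard_inter (S ×ˢ Set.univ) (Set.univ ×ˢ T)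
  rw [← domain_eq, Set.prod_inter_prod, Set.inter_univ, Set.univ_inter] at inclusion_exclusion
  simpa [trCountOn, Set.ncard_prod, Set.ncard_univ, card_S, card_T, mul_comm (Nat.card σ + 1)]
    using inclusion_exclusion

end Union

theorem exists_natCast_eq_and_natCast_eq {m n : ℕ} [NeZero m] [NeZero n] (hmn : m.Coprime n)
    (x : ZMod m) (y : ZMod n) : ∃ i : ℕ, (i : ZMod m) = x ∧ (i : ZMod n) = y := by
  obtain ⟨i, hx, hy⟩ := Nat.chineseRemainder hmn x.val y.val
  rw [← ZMod.natCast_eq_natCast_iff, ZMod.natCast_zmod_val] at hx hy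
  exact ⟨i, hx, hy⟩

theorem ncard_zmod_val_lt {n k : ℕ} [NeZero n] (hk : k ≤ n) :
    {q : ZMod n | q.val < k}.ncard = k := by
  have image_val : ZMod.val '' {q : ZMod n | q.val < k} = Set.Iio k := by
    ext i
    refine ⟨?_, fun hi => ⟨i, ?_⟩⟩
    · rintro ⟨q, hq, rfl⟩
      exact hq
    · simpa [ZMod.val_cast_of_lt (lt_of_lt_of_le hi hk)] using hi
  rw [← Set.ncard_image_of_injective _ (ZMod.val_injective n), image_val]
  simp [Set.ncard_eq_toFinset_card']

theorem mem_of_forall_mem_or_mem {β γ : Type*} [Nontrivial γ] {x x' : Option β} {y y' : Option γ}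
    (h : ∀ p q, p ∈ x ∨ q ∈ y → p ∈ x' ∨ q ∈ y') {p : β} (hp : p ∈ x) : p ∈ x' := by
  obtain ⟨q, hq⟩ : ∃ q, q ∉ y' := by
    cases y' with
    | none => exact ⟨Classical.arbitrary γ, by simp⟩
    | some r => exact (exists_ne r).imp fun q hq => by simpa using hq.symm
  exact (h p q (.inl hp)).resolve_right hq

theorem prod_option_ext {β γ : Type*} [Nontrivial β] [Nontrivial γ] {s t : Option β × Option γ}
    (h : ∀ p q, p ∈ s.1 ∨ q ∈ s.2 ↔ p ∈ t.1 ∨ q ∈ t.2) : s = t := by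
  refine Prod.ext (Option.ext fun p => ?_) (Option.ext fun q => ?_)
  · exact ⟨mem_of_forall_mem_or_mem fun p q => (h p q).1,
      mem_of_forall_mem_or_mem fun p q => (h p q).2⟩
  · exact ⟨mem_of_forall_mem_or_mem fun q p hqp => ((h p q).1 hqp.symm).symm,
      mem_of_forall_mem_or_mem fun q p hqp => ((h p q).2 hqp.symm).symm⟩

section Cycle

variable [DecidableEq α]

/-- The witness automaton: `a` rotates the cycle `ZMod n`, `b` loops on the states `0, …, k - 1`,
and no other symbol has a transition. The state `0` is initial and the only accepting one. -/
def cycle (a b : α) (n k : ℕ) : IDFA α (ZMod n) where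
  step q c := if c = a then some (q + 1) else if c = b ∧ q.val < k then some q else none
  start := 0
  accept := {0}

theorem evalFrom_cycle_replicate (a b : α) (n k : ℕ) (q : ZMod n) (i : ℕ) :
    (cycle a b n k).evalFrom q (List.replicate i a) = some (q + i) := by
  induction i with
  | zero => simp [evalFrom]
  | succ i ih =>
    rw [List.replicate_succ', evalFrom_concat, ih]
    simp [cycle, add_assoc]

theorem eval_cycle_replicate (a b : α) (n k i : ℕ) :
    (cycle a b n k).eval (List.replicate i a) = some (i : ZMod n) :=
  (evalFrom_cycle_replicate a b n k 0 i).trans (by rw [zero_add])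

theorem replicate_mem_acceptsFrom_cycle (a b : α) (n k : ℕ) (q : ZMod n) (i : ℕ) :
    List.replicate i a ∈ (cycle a b n k).acceptsFrom q ↔ -(i : ZMod n) = q := by
  rw [acceptsFrom, Set.mem_ofPred_eq, evalFrom_cycle_replicate]
  simp [cycle, neg_eq_iff_add_eq_zero, add_comm]

theorem connected_cycle (a b : α) (n k : ℕ) [NeZero n] : (cycle a b n k).Connected := fun q =>
  ⟨List.replicate q.val a, by rw [← eval, eval_cycle_replicate, ZMod.natCast_zmod_val]⟩

theorem acceptsFrom_cycle_nonempty (a b : α) (n k : ℕ) [NeZero n] (q : ZMod n) :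
    ((cycle a b n k).acceptsFrom q).Nonempty :=
  ⟨List.replicate (-q).val a, by simp [replicate_mem_acceptsFrom_cycle]⟩

theorem acceptsFrom_cycle_injective (a b : α) (n k : ℕ) [NeZero n] :
    Function.Injective (cycle a b n k).acceptsFrom := fun q q' h => by
  have := Set.ext_iff.1 h (List.replicate (-q).val a)
  simpa [replicate_mem_acceptsFrom_cycle] using this

theorem sc_accepts_cycle (a b : α) (n k : ℕ) [NeZero n] : sc (cycle a b n k).accepts = n := by
  rw [sc_accepts (connected_cycle a b n k) (acceptsFrom_cycle_nonempty a b n k)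
    (acceptsFrom_cycle_injective a b n k), Nat.card_zmod]

variable {a b : α}

theorem step_cycle_of_ne (hab : a ≠ b) (n k : ℕ) (q : ZMod n) :
    (cycle a b n k).step q b = if q.val < k then some q else none := by
  simp [cycle, hab.symm]

theorem eval_cycle_replicate_concat (hab : a ≠ b) (n k i : ℕ) :
    (cycle a b n k).eval (List.replicate i a ++ [b]) =
      if (i : ZMod n).val < k then some (i : ZMod n) else none := by
  rw [eval, evalFrom_concat, ← eval, eval_cycle_replicate]
  exact step_cycle_of_ne hab n k i

theorem trCountOn_cycle (hab : a ≠ b) {n k : ℕ} [NeZero n] (hk : k ≤ n) :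
    (cycle a b n k).trCountOn b = k := by
  simp [trCountOn, step_cycle_of_ne hab, ncard_zmod_val_lt hk]

theorem tcOn_accepts_cycle (hab : a ≠ b) {n k : ℕ} [NeZero n] (hk : k ≤ n) :
    tcOn (cycle a b n k).accepts b = k := by
  rw [tcOn_accepts (fun q _ => connected_cycle a b n k q)
    (fun _ p _ => acceptsFrom_cycle_nonempty a b n k p)
    (acceptsFrom_cycle_injective a b n k).injOn, trCountOn_cycle hab hk]

variable {n₁ n₂ k₁ k₂ : ℕ} [NeZero n₁] [NeZero n₂]

theorem acceptsFrom_union_cycle_injective [Nontrivial (ZMod n₁)] [Nontrivial (ZMod n₂)]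
    (hcop : n₁.Coprime n₂) :
    Function.Injective ((cycle a b n₁ k₁).union (cycle a b n₂ k₂)).acceptsFrom := by
  intro s t hst
  refine prod_option_ext fun p q => ?_
  obtain ⟨i, hp, hq⟩ := exists_natCast_eq_and_natCast_eq hcop (-p) (-q)
  have := Set.ext_iff.1 hst (List.replicate i a)
  simpa [mem_acceptsFrom_union, replicate_mem_acceptsFrom_cycle, hp, hq] using this

theorem exists_eval_union_cycle_eq_some (hab : a ≠ b) (hcop : n₁.Coprime n₂) (hk₁ : k₁ < n₁)
    (hk₂ : k₂ < n₂) (s : Option (ZMod n₁) × Option (ZMod n₂))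
    (hs : (((cycle a b n₁ k₁).union (cycle a b n₂ k₂)).step s b).isSome) :
    ∃ w, ((cycle a b n₁ k₁).union (cycle a b n₂ k₂)).eval w = some s := by
  simp only [eval_union]
  rw [isSome_step_union] at hs
  simp only [step_cycle_of_ne hab] at hs
  obtain ⟨_ | x, _ | y⟩ := s
  · simp at hs
  · have hy : y.val < k₂ := by simpa using hs
    -- `aⁱ` leads to `(k₁, y)`, where `b` kills the first component and fixes the second.
    obtain ⟨i, h₁, h₂⟩ := exists_natCast_eq_and_natCast_eq hcop k₁ y
    refine ⟨List.replicate i a ++ [b], ?_⟩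
    simp [eval_cycle_replicate_concat hab, h₁, h₂, ZMod.val_cast_of_lt hk₁, hy]
  · have hx : x.val < k₁ := by simpa using hs
    obtain ⟨i, h₁, h₂⟩ := exists_natCast_eq_and_natCast_eq hcop x k₂
    refine ⟨List.replicate i a ++ [b], ?_⟩
    simp [eval_cycle_replicate_concat hab, h₁, h₂, ZMod.val_cast_of_lt hk₂, hx]
  · obtain ⟨i, h₁, h₂⟩ := exists_natCast_eq_and_natCast_eq hcop x y
    refine ⟨List.replicate i a, ?_⟩
    simp [eval_cycle_replicate, h₁, h₂]

theorem tcOn_union_accepts_cycle [Nontrivial (ZMod n₁)] [Nontrivial (ZMod n₂)] (hab : a ≠ b)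
    (hcop : n₁.Coprime n₂) (hk₁ : k₁ < n₁) (hk₂ : k₂ < n₂) :
    tcOn ((cycle a b n₁ k₁).accepts ∪ (cycle a b n₂ k₂).accepts) b =
      k₁ * n₂ + k₂ * n₁ - k₁ * k₂ + k₁ + k₂ := by
  have tcOn_eq := tcOn_accepts (exists_eval_union_cycle_eq_some hab hcop hk₁ hk₂)
    (fun _ _ ht => acceptsFrom_union_nonempty _ _ (acceptsFrom_cycle_nonempty a b n₁ k₁)
      (acceptsFrom_cycle_nonempty a b n₂ k₂) ((mem_step_union _ _ _ _ _).1 ht).2)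
    (acceptsFrom_union_cycle_injective hcop).injOn
  have count := trCountOn_union (cycle a b n₁ k₁) (cycle a b n₂ k₂) b
  rw [← tcOn_eq, accepts_union, trCountOn_cycle hab hk₁.le, trCountOn_cycle hab hk₂.le,
    Nat.card_zmod, Nat.card_zmod, mul_add_one, mul_add_one] at count
  have : k₁ * k₂ ≤ k₁ * n₂ := Nat.mul_le_mul_left k₁ hk₂.le
  omega

end Cycle

end IDFA

theorem tcOn_union_lower_bound_general {α : Type} [Nontrivial α] (b : α) (n₁ n₂ k₁ k₂ : ℕ)
    (hn₁ : 2 ≤ n₁) (hn₂ : 2 ≤ n₂) (hcop : Nat.Coprime n₁ n₂) (hk₁ : k₁ < n₁) (hk₂ : k₂ < n₂) :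
    ∃ L₁ L₂ : Set (List α), IsRegularLang L₁ ∧ IsRegularLang L₂ ∧
      sc L₁ = n₁ ∧ sc L₂ = n₂ ∧ tcOn L₁ b = k₁ ∧ tcOn L₂ b = k₂ ∧
      tcOn (L₁ ∪ L₂) b = k₁ * n₂ + k₂ * n₁ - k₁ * k₂ + k₁ + k₂ := by
  classical
  obtain ⟨a, hab⟩ := exists_ne b
  have : NeZero n₁ := .of_gt hn₁
  have : NeZero n₂ := .of_gt hn₂
  have : Fact (1 < n₁) := ⟨hn₁⟩
  have : Fact (1 < n₂) := ⟨hn₂⟩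
  exact ⟨(IDFA.cycle a b n₁ k₁).accepts, (IDFA.cycle a b n₂ k₂).accepts,
    ⟨_, inferInstance, _, rfl⟩, ⟨_, inferInstance, _, rfl⟩,
    IDFA.sc_accepts_cycle a b n₁ k₁, IDFA.sc_accepts_cycle a b n₂ k₂,
    IDFA.tcOn_accepts_cycle hab hk₁.le, IDFA.tcOn_accepts_cycle hab hk₂.le,
    IDFA.tcOn_union_accepts_cycle hab hcop hk₁ hk₂⟩

/-- the upper bound for the `b`-transition complexity of union is
tight for relatively prime `n₁, n₂ ≥ 2` and any `1 ≤ kᵢ < nᵢ`. -/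
theorem tcOn_union_lower_bound {α : Type} [Finite α] (hcard : 2 ≤ Nat.card α) (b : α)
    (n₁ n₂ k₁ k₂ : ℕ) (hn₁ : 2 ≤ n₁) (hn₂ : 2 ≤ n₂) (hcop : Nat.Coprime n₁ n₂)
    (hk₁ : 1 ≤ k₁) (hk₁' : k₁ < n₁) (hk₂ : 1 ≤ k₂) (hk₂' : k₂ < n₂) :
    ∃ L₁ L₂ : Set (List α), IsRegularLang L₁ ∧ IsRegularLang L₂ ∧
      sc L₁ = n₁ ∧ sc L₂ = n₂ ∧ tcOn L₁ b = k₁ ∧ tcOn L₂ b = k₂ ∧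
      tcOn (L₁ ∪ L₂) b = k₁ * n₂ + k₂ * n₁ - k₁ * k₂ + k₁ + k₂ := by
  have : Nontrivial α := Finite.one_lt_card_iff_nontrivial.1 hcard
  exact tcOn_union_lower_bound_general b n₁ n₂ k₁ k₂ hn₁ hn₂ hcop hk₁' hk₂'
end

section
/- Let A₁ and A₂ be connected incomplete DFAs over the same alphabet Σ (every state is reachable from the start state), and let B be the product DFA for L(A₁) ∪ L(A₂) obtained from the cross-product construction for incomplete DFAs (states are pairs from Q₁' × Q₂', where Qᵢ' adds a dead state d to Qᵢ when Aᵢ has some undefined transition; a transition on b is defined at (q₁', q₂') whenever at least one component has a defined b-transition, the other component going to d if its b-transition is undefined). Then #tr(B) ≤ 2·(#tr(A₁)·#tr(A₂) + #tr(A₁) + #tr(A₂)). -/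
/-- The cross-product construction for the union of two incomplete DFAs: the
state set is `Q₁' × Q₂'` where `Qᵢ' = Qᵢ ∪ {d}` (`d = none` is the dead state);
a `b`-transition is defined at a pair whenever at least one component has a
defined `b`-transition, the other component going to the dead state `d` if its
`b`-transition is undefined. -/
def IDFA.unionProd {α σ₁ σ₂ : Type} (A₁ : IDFA α σ₁) (A₂ : IDFA α σ₂) :
    IDFA α (Option σ₁ × Option σ₂) where
  step p b :=
    let r₁ := p.1.bind fun q => A₁.step q b
    let r₂ := p.2.bind fun q => A₂.step q b
    if r₁.isSome ∨ r₂.isSome then some (r₁, r₂) else none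
  start := (some A₁.start, some A₂.start)
  accept := {p | (∃ q ∈ A₁.accept, p.1 = some q) ∨ ∃ q ∈ A₂.accept, p.2 = some q}

/-!
A transition of the product is a transition of one factor together with an arbitrary state, possibly
dead, of the other factor, so `#tr(B) ≤ #tr(A₁)·(|Q₂| + 1) + #tr(A₂)·(|Q₁| + 1)`. In a connected
automaton every state other than the start state is the target of a transition, whence
`|Qᵢ| ≤ #tr(Aᵢ) + 1`.
-/

namespace IDFA

section States

variable {α σ : Type} {A : IDFA α σ}

/-- The defined transitions of `A`, each encoded by its source and its label; the cardinality of
this set is `A.trCount`. -/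
def transitions (A : IDFA α σ) : Set (σ × α) :=
  {p | (A.step p.1 p.2).isSome}

theorem eq_or_exists_step_eq_some_of_evalFrom_eq_some {p q : σ} {w : List α}
    (hw : A.evalFrom p w = some q) : q = p ∨ ∃ r a, A.step r a = some q := by
  rcases List.eq_nil_or_concat w with rfl | ⟨v, a, rfl⟩
  · exact .inl (Option.some.inj hw).symm
  · rw [evalFrom, List.concat_eq_append, List.foldl_append] at hw
    obtain ⟨r, -, hr⟩ := Option.bind_eq_some_iff.mp hw
    exact .inr ⟨r, a, hr⟩

theorem Connected.range_some_subset_insert_image (h : A.Connected) :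
    Set.range (some : σ → Option σ) ⊆
      insert (some A.start) ((fun p ↦ A.step p.1 p.2) '' A.transitions) := by
  rintro _ ⟨q, rfl⟩
  obtain ⟨w, hw⟩ := h q
  rcases eq_or_exists_step_eq_some_of_evalFrom_eq_some hw with rfl | ⟨r, a, hr⟩
  · exact Set.mem_insert _ _
  · exact .inr ⟨(r, a), Option.isSome_of_eq_some hr, hr⟩

theorem Connected.finite (h : A.Connected) (hA : A.transitions.Finite) : Finite σ := by
  have : Finite (Set.range (some : σ → Option σ)) :=
    ((hA.image _).insert _).subset h.range_some_subset_insert_image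
  exact Finite.of_injective_finite_range (Option.some_injective σ)

theorem Connected.card_le_trCount_add_one (h : A.Connected) (hA : A.transitions.Finite) :
    Nat.card σ ≤ A.trCount + 1 :=
  calc
    Nat.card σ = (Set.range (some : σ → Option σ)).ncard :=
      (Set.ncard_range_of_injective (Option.some_injective σ)).symm
    _ ≤ (insert (some A.start) ((fun p ↦ A.step p.1 p.2) '' A.transitions)).ncard :=
      Set.ncard_le_ncard h.range_some_subset_insert_image ((hA.image _).insert _)
    _ ≤ ((fun p ↦ A.step p.1 p.2) '' A.transitions).ncard + 1 := Set.ncard_insert_le _ _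
    _ ≤ A.trCount + 1 := Nat.add_le_add_right (Set.ncard_image_le hA) 1

end States

section UnionProd

variable {α σ₁ σ₂ : Type}

/-- The transition of the product given by a transition of the first factor and a state, possibly
the dead state `none`, of the second factor. -/
def leftTransition (x : (σ₁ × α) × Option σ₂) : (Option σ₁ × Option σ₂) × α :=
  ((some x.1.1, x.2), x.1.2)

/-- The transition of the product given by a transition of the second factor and a state, possibly
the dead state `none`, of the first factor. -/
def rightTransition (x : (σ₂ × α) × Option σ₁) : (Option σ₁ × Option σ₂) × α :=
  ((x.2, some x.1.1), x.1.2)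

theorem leftTransition_injective :
    Function.Injective (leftTransition : (σ₁ × α) × Option σ₂ → _) := by
  rintro ⟨⟨q, b⟩, p⟩ ⟨⟨q', b'⟩, p'⟩ h
  simp_all [leftTransition]

theorem rightTransition_injective :
    Function.Injective (rightTransition : (σ₂ × α) × Option σ₁ → _) := by
  rintro ⟨⟨q, b⟩, p⟩ ⟨⟨q', b'⟩, p'⟩ h
  simp_all [rightTransition]

variable (A₁ : IDFA α σ₁) (A₂ : IDFA α σ₂)

theorem isSome_step_unionProd (p : Option σ₁ × Option σ₂) (b : α) :
    ((A₁.unionProd A₂).step p b).isSome ↔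
      (p.1.bind fun q ↦ A₁.step q b).isSome ∨ (p.2.bind fun q ↦ A₂.step q b).isSome := by
  simp only [unionProd, Option.isSome_ite]

theorem transitions_unionProd :
    (A₁.unionProd A₂).transitions =
      leftTransition '' (A₁.transitions ×ˢ Set.univ) ∪
        rightTransition '' (A₂.transitions ×ˢ Set.univ) := by
  ext ⟨⟨_ | q₁, _ | q₂⟩, b⟩ <;>
    simp [transitions, isSome_step_unionProd, leftTransition, rightTransition]

theorem trCount_unionProd_le_trCount_mul_card [Finite σ₁] [Finite σ₂] :
    (A₁.unionProd A₂).trCount ≤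
      A₁.trCount * (Nat.card σ₂ + 1) + A₂.trCount * (Nat.card σ₁ + 1) :=
  calc
    (A₁.unionProd A₂).trCount
      = (leftTransition '' (A₁.transitions ×ˢ Set.univ) ∪
          rightTransition '' (A₂.transitions ×ˢ Set.univ)).ncard :=
      congrArg Set.ncard (transitions_unionProd A₁ A₂)
    _ ≤ (leftTransition '' (A₁.transitions ×ˢ (Set.univ : Set (Option σ₂)))).ncard +
          (rightTransition '' (A₂.transitions ×ˢ (Set.univ : Set (Option σ₁)))).ncard :=
      Set.ncard_union_le _ _
    _ = A₁.transitions.ncard * (Nat.card σ₂ + 1) + A₂.transitions.ncard * (Nat.card σ₁ + 1) := by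
      rw [Set.ncard_image_of_injective _ leftTransition_injective,
        Set.ncard_image_of_injective _ rightTransition_injective, Set.ncard_prod, Set.ncard_prod,
        Set.ncard_univ, Set.ncard_univ, Finite.card_option, Finite.card_option]

end UnionProd

end IDFA

theorem trCount_unionProd_le_general {α σ₁ σ₂ : Type} (A₁ : IDFA α σ₁) (A₂ : IDFA α σ₂)
    (h₁ : A₁.Connected) (h₂ : A₂.Connected)
    (hA₁ : A₁.transitions.Finite) (hA₂ : A₂.transitions.Finite) :
    (A₁.unionProd A₂).trCount ≤
      2 * (A₁.trCount * A₂.trCount + A₁.trCount + A₂.trCount) := by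
  have : Finite σ₁ := h₁.finite hA₁
  have : Finite σ₂ := h₂.finite hA₂
  calc
    (A₁.unionProd A₂).trCount
      ≤ A₁.trCount * (Nat.card σ₂ + 1) + A₂.trCount * (Nat.card σ₁ + 1) :=
      A₁.trCount_unionProd_le_trCount_mul_card A₂
    _ ≤ A₁.trCount * (A₂.trCount + 1 + 1) + A₂.trCount * (A₁.trCount + 1 + 1) := by
      gcongr
      · exact h₂.card_le_trCount_add_one hA₂
      · exact h₁.card_le_trCount_add_one hA₁
    _ = 2 * (A₁.trCount * A₂.trCount + A₁.trCount + A₂.trCount) := by ring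

/-- for connected incomplete DFAs `A₁, A₂`, the product automaton
`B` for `L(A₁) ∪ L(A₂)` satisfies
`#tr(B) ≤ 2·(#tr(A₁)·#tr(A₂) + #tr(A₁) + #tr(A₂))`. -/
theorem trCount_unionProd_le {α : Type} [Finite α] {σ₁ σ₂ : Type} [Finite σ₁] [Finite σ₂]
    (A₁ : IDFA α σ₁) (A₂ : IDFA α σ₂) (h₁ : A₁.Connected) (h₂ : A₂.Connected) :
    (A₁.unionProd A₂).trCount ≤
      2 * (A₁.trCount * A₂.trCount + A₁.trCount + A₂.trCount) :=
  trCount_unionProd_le_general A₁ A₂ h₁ h₂ (Set.toFinite _) (Set.toFinite _)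
end
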